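/- arXiv:math/0612858 — 2 statements merged into one kernel-verified Lean document; each statement's English description precedes it below -/
import Mathlib

section
/- Scaling property of the ε-functions (axiom (iv) of a geometric crystal, part of Theorem 5.3): for each i ∈ {0,1,2} and all c, x0,...,x5 ∈ ℝ_{>0} one has ε_i(e_i^c(x)) = c^{-1}·ε_i(x). -/
noncomputable section

/-- the action `e1^c` on `(x0,...,x5)` -/
def e1act (c : ℝ) (x : Fin 6 → ℝ) : Fin 6 → ℝ :=
  let x0 := x 0; let x1 := x 1; let x2 := x 2; let x3 := x 3; let x4 := x 4; let x5 := x 5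
  let A1 := x0/x1 + x0*x2^3/(x1^2*x3) + x0*x2^3*x4^3/(x1^2*x3^2*x5)
  let B1 := c*x0/x1 + x0*x2^3/(x1^2*x3) + x0*x2^3*x4^3/(x1^2*x3^2*x5)
  let B3 := c*x0/x1 + c*x0*x2^3/(x1^2*x3) + x0*x2^3*x4^3/(x1^2*x3^2*x5)
  ![x0, (B1/A1)*x1, x2, (B3/B1)*x3, x4, (c*A1/B3)*x5]

/-- the action `e2^c` on `(x0,...,x5)` -/
def e2act (c : ℝ) (x : Fin 6 → ℝ) : Fin 6 → ℝ :=
  let x0 := x 0; let x1 := x 1; let x2 := x 2; let x3 := x 3; let x4 := x 4; let x5 := x 5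
  let A2 := x1/x2 + x1*x3/(x2^2*x4)
  let B2 := c*x1/x2 + x1*x3/(x2^2*x4)
  ![x0, x1, (B2/A2)*x2, x3, (c*A2/B2)*x4, x5]

end

noncomputable section

/-- the action `e0^c` on `(x0,...,x5)` -/
def e0act (c : ℝ) (x : Fin 6 → ℝ) : Fin 6 → ℝ :=
  let x0 := x 0; let x1 := x 1; let x2 := x 2; let x3 := x 3; let x4 := x 4; let x5 := x 5
  let D := c^2*x0^2*x2^3*x3 + x1*x2^3*x3^2*x5
    + c*x0*(x1*x3^3 + 3*x1*x2*x3^2*x4 + 3*x1*x2^2*x3*x4^2 + x2^3*(x3^2 + x1*x4^3 + x1*x3*x5))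
  let E := x0^2*x2^3*x3 + x1*x2^3*x3^2*x5
    + x0*(x1*x3^3 + 3*x1*x2*x3^2*x4 + 3*x1*x2^2*x3*x4^2 + x2^3*(x3^2 + x1*x4^3 + x1*x3*x5))
  let F := c*x0^2*x2^3*x3 + x1*x2^3*x3^2*x5
    + x0*(c*x1*x3^3 + 3*c*x1*x2*x3^2*x4 + 3*c*x1*x2^2*x3*x4^2
        + x2^3*(x3^2 + c*x1*x4^3 + c*x1*x3*x5))
  let G := c*x0^2*x2^3*x3 + x1*x2^3*x3^2*x5
    + x0*(x1*x3^3 + (2+c)*x1*x2*x3^2*x4 + (1+2*c)*x1*x2^2*x3*x4^2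
        + x2^3*(x3^2 + c*x1*x4^3 + c*x1*x3*x5))
  let H := c*x0^2*x2^3*x3 + x1*x2^3*x3^2*x5
    + x0*(x1*x3^3 + 3*x1*x2*x3^2*x4 + 3*x1*x2^2*x3*x4^2 + x2^3*(x3^2 + x1*x4^3 + c*x1*x3*x5))
  ![D/(c*E)*x0, F/(c*E)*x1, G/(c*E)*x2, D*H/(c^2*E*F)*x3, D/(c*G)*x4, D/(c*H)*x5]

end

noncomputable section

def eps1 (x : Fin 6 → ℝ) : ℝ :=
  x 0/x 1 + x 0*(x 2)^3/((x 1)^2*x 3) + x 0*(x 2)^3*(x 4)^3/((x 1)^2*(x 3)^2*x 5)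

def eps2 (x : Fin 6 → ℝ) : ℝ := x 1/x 2 + x 1*x 3/((x 2)^2*x 4)

def eps0 (x : Fin 6 → ℝ) : ℝ :=
  ((x 0)^2*(x 2)^3*x 3 + x 1*(x 2)^3*(x 3)^2*x 5
      + x 0*(x 1*(x 3)^3 + 3*x 1*x 2*(x 3)^2*x 4 + 3*x 1*(x 2)^2*x 3*(x 4)^2
          + (x 2)^3*((x 3)^2 + x 1*(x 4)^3 + x 1*x 3*x 5)))
    / ((x 0)^3*(x 2)^3*x 3)

def gamma0 (x : Fin 6 → ℝ) : ℝ := (x 0)^2/(x 1*x 3*x 5)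

def gamma1 (x : Fin 6 → ℝ) : ℝ := (x 1)^2*(x 3)^2*(x 5)^2/(x 0*(x 2)^3*(x 4)^3)

def gamma2 (x : Fin 6 → ℝ) : ℝ := (x 2)^2*(x 4)^2/(x 1*x 3*x 5)

end

noncomputable section

def eact : Fin 3 → ℝ → (Fin 6 → ℝ) → (Fin 6 → ℝ) := ![e0act, e1act, e2act]

def epss : Fin 3 → (Fin 6 → ℝ) → ℝ := ![eps0, eps1, eps2]

end

/-!
Write `ε_i = m₁ + ⋯ + mₙ` and let `S_j` be this sum after its first `j` terms have been multiplied
by `c`, so that `S₀ = ε_i` and `S_n = c ε_i`. The action `e_i^c` multiplies `m_j` by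
`S₀² / (S_{j-1} S_j)`. Since `S_j - S_{j-1} = (c - 1) m_j`, the sum of the `m_j / (S_{j-1} S_j)`
telescopes to `ε_i / (S₀ S_n)`, and hence `ε_i` becomes `S₀² ε_i / (S₀ S_n) = ε_i / c`.

For `i = 1, 2` the `m_j` are the monomials of `ε_i`. For `i = 0` they are three groups of monomials
containing the factors `x₀ + x₁x₅` and `x₃ + x₂x₄`. The action multiplies each of these two
binomials by a Laurent monomial in `c, D, …, H` because `(x₀ + x₁x₅) D = c x₀ H + x₁x₅ F` and
`(x₃ + x₂x₄) G = x₃ H + x₂x₄ F`.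
-/

section Rescaling

variable {n : ℕ}

section Semiring

variable {R : Type*} [Semiring R]

/-- The sum of the terms `m i` after the first `j` of them have been multiplied by `c`. In the
formulas for `e_i^c` these are the numerators and denominators of the coordinate factors. -/
def prefixScaledSum (c : R) (m : Fin n → R) (j : Fin (n + 1)) : R :=
  ∑ i, if i.castSucc < j then c * m i else m i

theorem prefixScaledSum_zero (c : R) (m : Fin n → R) : prefixScaledSum c m 0 = ∑ i, m i := by
  simp [prefixScaledSum]

theorem prefixScaledSum_last (c : R) (m : Fin n → R) :
    prefixScaledSum c m (Fin.last n) = c * ∑ i, m i := by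
  simp [prefixScaledSum, Fin.castSucc_lt_last, Finset.mul_sum]

theorem prefixScaledSum_pair (c a₁ a₂ : R) :
    prefixScaledSum c ![a₁, a₂] = ![a₁ + a₂, c * a₁ + a₂, c * (a₁ + a₂)] := by
  ext j
  fin_cases j <;> simp [prefixScaledSum, mul_add]

theorem prefixScaledSum_triple (c a₁ a₂ a₃ : R) :
    prefixScaledSum c ![a₁, a₂, a₃] =
      ![a₁ + a₂ + a₃, c * a₁ + a₂ + a₃, c * a₁ + c * a₂ + a₃, c * (a₁ + a₂ + a₃)] := by
  ext j
  fin_cases j <;> simp [prefixScaledSum, Fin.sum_univ_three, Fin.lt_def, mul_add]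

theorem prefixScaledSum_pos [PartialOrder R] [IsStrictOrderedRing R] [NeZero n] {c : R}
    (hc : 0 < c) {m : Fin n → R} (hm : ∀ i, 0 < m i) (j : Fin (n + 1)) :
    0 < prefixScaledSum c m j := by
  refine Finset.sum_pos (fun i _ ↦ ?_) Finset.univ_nonempty
  split_ifs
  exacts [mul_pos hc (hm i), hm i]

end Semiring

section CommRing

variable {R : Type*} [CommRing R]

theorem prefixScaledSum_succ (c : R) (m : Fin n → R) (j : Fin n) :
    prefixScaledSum c m j.succ = prefixScaledSum c m j.castSucc + (c - 1) * m j := by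
  have hterm (i : Fin n) : (if i.castSucc < j.succ then c * m i else m i) =
      (if i.castSucc < j.castSucc then c * m i else m i) + if i = j then (c - 1) * m j else 0 := by
    rcases lt_trichotomy i j with h | rfl | h
    · simp [h, h.le, h.ne]
    · simp only [Fin.castSucc_lt_succ, lt_irrefl, if_true, if_false]
      ring
    · simp [h.not_ge, h.not_gt, h.ne']
  simp only [prefixScaledSum, hterm, Finset.sum_add_distrib, Finset.sum_ite_eq', Finset.mem_univ,
    if_true]

theorem eq_add_mul_sum_of_succ_eq {S : Fin (n + 1) → R} {m : Fin n → R} {d : R}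
    (hS : ∀ i, S i.succ = S i.castSucc + d * m i) : S (Fin.last n) = S 0 + d * ∑ i, m i := by
  have htel := (Fin.sum_univ_succ S).symm.trans (Fin.sum_univ_castSucc S)
  simp only [hS, Finset.sum_add_distrib, ← Finset.mul_sum] at htel
  linear_combination -htel

end CommRing

section Field

variable {K : Type*} [Field K]

/-- The effect of `e_i^c` on the terms `m` of `ε_i`. The factor `prefixScaledSum c m 0` is the
unscaled sum of all terms. -/
def rescaledTerms (c : K) (m : Fin n → K) (i : Fin n) : K :=
  prefixScaledSum c m 0 ^ 2 *
    (m i / (prefixScaledSum c m i.castSucc * prefixScaledSum c m i.succ))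

/-- For `d ≠ 0` this telescopes because `d * m i / (S i * S (i + 1)) = 1 / S i - 1 / S (i + 1)`;
the induction also covers `d = 0`. -/
theorem sum_div_mul_succ {S : Fin (n + 1) → K} {m : Fin n → K} {d : K}
    (hS : ∀ i, S i.succ = S i.castSucc + d * m i) (hS0 : ∀ j, S j ≠ 0) :
    ∑ i, m i / (S i.castSucc * S i.succ) = (∑ i, m i) / (S 0 * S (Fin.last n)) := by
  induction n with
  | zero => simp
  | succ n ih =>
    have hinit := ih (S := S ∘ Fin.castSucc) (m := m ∘ Fin.castSucc)
      (fun i ↦ hS i.castSucc) (fun j ↦ hS0 j.castSucc)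
    have hprev := eq_add_mul_sum_of_succ_eq (S := S ∘ Fin.castSucc) (m := m ∘ Fin.castSucc)
      (fun i ↦ hS i.castSucc)
    have hlast := hS (Fin.last n)
    simp only [Function.comp_apply, Fin.castSucc_zero, ← Fin.succ_castSucc,
      Fin.succ_last] at hinit hprev hlast
    rw [Fin.sum_univ_castSucc, Fin.sum_univ_castSucc, hinit, Fin.succ_last]
    have h0 := hS0 0
    have h1 := hS0 (Fin.last n).castSucc
    have h2 := hS0 (Fin.last (n + 1))
    field_simp
    linear_combination (∑ i : Fin n, m i.castSucc) * hlast - m (Fin.last n) * hprev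

theorem sum_rescaledTerms {c : K} {m : Fin n → K} (hS : ∀ j, prefixScaledSum c m j ≠ 0) :
    ∑ i, rescaledTerms c m i = c⁻¹ * ∑ i, m i := by
  have hzero := hS 0
  have hlast := hS (Fin.last n)
  simp only [rescaledTerms, ← Finset.mul_sum]
  rw [sum_div_mul_succ (prefixScaledSum_succ c m) hS]
  rw [prefixScaledSum_last] at hlast ⊢
  rw [prefixScaledSum_zero] at hzero ⊢
  field_simp [left_ne_zero_of_mul hlast]

end Field

end Rescaling

noncomputable section Terms

variable {c : ℝ} {x : Fin 6 → ℝ}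

/-- The summands of `ε₁`, in the order in which `e₁^c` scales them. -/
def eps1Terms (x : Fin 6 → ℝ) : Fin 3 → ℝ :=
  ![x 0 / x 1, x 0 * x 2 ^ 3 / (x 1 ^ 2 * x 3), x 0 * x 2 ^ 3 * x 4 ^ 3 / (x 1 ^ 2 * x 3 ^ 2 * x 5)]

theorem eps1_eq_sum (x : Fin 6 → ℝ) : eps1 x = ∑ j, eps1Terms x j := by
  simp [eps1, eps1Terms, Fin.sum_univ_three]

theorem eps1Terms_pos (hx : ∀ k, 0 < x k) (j : Fin 3) : 0 < eps1Terms x j := by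
  have h0 := hx 0; have h1 := hx 1; have h2 := hx 2
  have h3 := hx 3; have h4 := hx 4; have h5 := hx 5
  match j with
  | 0 | 1 | 2 => simp only [eps1Terms, Matrix.cons_val]; positivity

theorem e1act_eq (c : ℝ) (x : Fin 6 → ℝ) :
    e1act c x =
      let S := prefixScaledSum c (eps1Terms x)
      ![x 0, S 1 / S 0 * x 1, x 2, S 2 / S 1 * x 3, x 4, S 3 / S 2 * x 5] := by
  simp only [e1act, eps1Terms, prefixScaledSum_triple, Matrix.cons_val, mul_div_assoc, mul_assoc]

theorem eps1Terms_e1act (hc : 0 < c) (hx : ∀ k, 0 < x k) :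
    eps1Terms (e1act c x) = rescaledTerms c (eps1Terms x) := by
  have hS := prefixScaledSum_pos hc (eps1Terms_pos hx)
  have h0 := hx 0; have h1 := hx 1; have h2 := hx 2
  have h3 := hx 3; have h4 := hx 4; have h5 := hx 5
  rw [e1act_eq]
  unfold rescaledTerms
  generalize prefixScaledSum c (eps1Terms x) = S at hS ⊢
  have hS0 := hS 0; have hS1 := hS 1; have hS2 := hS 2; have hS3 := hS 3
  ext j
  match j with
  | 0 | 1 | 2 =>
    simp only [eps1Terms, Matrix.cons_val, Fin.castSucc_zero, Fin.castSucc_one,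
      Fin.succ_zero_eq_one, Fin.succ_one_eq_two, Fin.reduceSucc, Fin.reduceCastSucc]
    field_simp

theorem eps1_e1act (hc : 0 < c) (hx : ∀ k, 0 < x k) : eps1 (e1act c x) = c⁻¹ * eps1 x := by
  rw [eps1_eq_sum, eps1_eq_sum, eps1Terms_e1act hc hx, sum_rescaledTerms]
  exact fun j ↦ ne_of_gt (prefixScaledSum_pos hc (eps1Terms_pos hx) j)

/-- The summands of `ε₂`, in the order in which `e₂^c` scales them. -/
def eps2Terms (x : Fin 6 → ℝ) : Fin 2 → ℝ :=
  ![x 1 / x 2, x 1 * x 3 / (x 2 ^ 2 * x 4)]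

theorem eps2_eq_sum (x : Fin 6 → ℝ) : eps2 x = ∑ j, eps2Terms x j := by
  simp [eps2, eps2Terms]

theorem eps2Terms_pos (hx : ∀ k, 0 < x k) (j : Fin 2) : 0 < eps2Terms x j := by
  have h1 := hx 1; have h2 := hx 2; have h3 := hx 3; have h4 := hx 4
  match j with
  | 0 | 1 => simp only [eps2Terms, Matrix.cons_val]; positivity

theorem e2act_eq (c : ℝ) (x : Fin 6 → ℝ) :
    e2act c x =
      let S := prefixScaledSum c (eps2Terms x)
      ![x 0, x 1, S 1 / S 0 * x 2, x 3, S 2 / S 1 * x 4, x 5] := by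
  simp only [e2act, eps2Terms, prefixScaledSum_pair, Matrix.cons_val, mul_div_assoc]

theorem eps2Terms_e2act (hc : 0 < c) (hx : ∀ k, 0 < x k) :
    eps2Terms (e2act c x) = rescaledTerms c (eps2Terms x) := by
  have hS := prefixScaledSum_pos hc (eps2Terms_pos hx)
  have h1 := hx 1; have h2 := hx 2; have h3 := hx 3; have h4 := hx 4
  rw [e2act_eq]
  unfold rescaledTerms
  generalize prefixScaledSum c (eps2Terms x) = S at hS ⊢
  have hS0 := hS 0; have hS1 := hS 1; have hS2 := hS 2
  ext j
  match j with
  | 0 | 1 =>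
    simp only [eps2Terms, Matrix.cons_val, Fin.castSucc_zero, Fin.castSucc_one,
      Fin.succ_zero_eq_one, Fin.succ_one_eq_two]
    field_simp

theorem eps2_e2act (hc : 0 < c) (hx : ∀ k, 0 < x k) : eps2 (e2act c x) = c⁻¹ * eps2 x := by
  rw [eps2_eq_sum, eps2_eq_sum, eps2Terms_e2act hc hx, sum_rescaledTerms]
  exact fun j ↦ ne_of_gt (prefixScaledSum_pos hc (eps2Terms_pos hx) j)

/-- The monomials of `ε₀` grouped into three terms, in the order in which `e₀^c` scales them. The
grouping is read off from the polynomials `H` and `F` of `e₀^c`, in which the first term and the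
first two terms, respectively, are multiplied by `c`. -/
def eps0Terms (x : Fin 6 → ℝ) : Fin 3 → ℝ :=
  ![(x 0 + x 1 * x 5) / x 0 ^ 2, x 1 * (x 3 + x 2 * x 4) ^ 3 / (x 0 ^ 2 * x 2 ^ 3 * x 3),
    x 3 * (x 0 + x 1 * x 5) / x 0 ^ 3]

theorem eps0_eq_sum (hx : ∀ k, 0 < x k) : eps0 x = ∑ j, eps0Terms x j := by
  have h0 := hx 0
  have h2 := hx 2
  have h3 := hx 3
  simp only [eps0, eps0Terms, Fin.sum_univ_three, Matrix.cons_val]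
  field_simp
  ring

theorem eps0Terms_pos (hx : ∀ k, 0 < x k) (j : Fin 3) : 0 < eps0Terms x j := by
  have h0 := hx 0; have h1 := hx 1; have h2 := hx 2
  have h3 := hx 3; have h4 := hx 4; have h5 := hx 5
  match j with
  | 0 | 1 | 2 => simp only [eps0Terms, Matrix.cons_val]; positivity

/-- The polynomial `D` of `e₀^c`, the numerator in its action on `x₀` and `x₄`. -/
def e0D (c : ℝ) (x : Fin 6 → ℝ) : ℝ :=
  c ^ 2 * x 0 ^ 2 * x 2 ^ 3 * x 3 + x 1 * x 2 ^ 3 * x 3 ^ 2 * x 5 +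
    c * x 0 * (x 1 * x 3 ^ 3 + 3 * x 1 * x 2 * x 3 ^ 2 * x 4 + 3 * x 1 * x 2 ^ 2 * x 3 * x 4 ^ 2 +
      x 2 ^ 3 * (x 3 ^ 2 + x 1 * x 4 ^ 3 + x 1 * x 3 * x 5))

/-- The polynomial `E` of `e₀^c`, the numerator of `ε₀`. -/
def e0E (x : Fin 6 → ℝ) : ℝ :=
  x 0 ^ 2 * x 2 ^ 3 * x 3 + x 1 * x 2 ^ 3 * x 3 ^ 2 * x 5 +
    x 0 * (x 1 * x 3 ^ 3 + 3 * x 1 * x 2 * x 3 ^ 2 * x 4 + 3 * x 1 * x 2 ^ 2 * x 3 * x 4 ^ 2 +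
      x 2 ^ 3 * (x 3 ^ 2 + x 1 * x 4 ^ 3 + x 1 * x 3 * x 5))

/-- The polynomial `F` of `e₀^c`, the numerator in its action on `x₁`. -/
def e0F (c : ℝ) (x : Fin 6 → ℝ) : ℝ :=
  c * x 0 ^ 2 * x 2 ^ 3 * x 3 + x 1 * x 2 ^ 3 * x 3 ^ 2 * x 5 +
    x 0 * (c * x 1 * x 3 ^ 3 + 3 * c * x 1 * x 2 * x 3 ^ 2 * x 4 +
      3 * c * x 1 * x 2 ^ 2 * x 3 * x 4 ^ 2 +
      x 2 ^ 3 * (x 3 ^ 2 + c * x 1 * x 4 ^ 3 + c * x 1 * x 3 * x 5))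

/-- The polynomial `G` of `e₀^c`, the numerator in its action on `x₂`. -/
def e0G (c : ℝ) (x : Fin 6 → ℝ) : ℝ :=
  c * x 0 ^ 2 * x 2 ^ 3 * x 3 + x 1 * x 2 ^ 3 * x 3 ^ 2 * x 5 +
    x 0 * (x 1 * x 3 ^ 3 + (2 + c) * x 1 * x 2 * x 3 ^ 2 * x 4 +
      (1 + 2 * c) * x 1 * x 2 ^ 2 * x 3 * x 4 ^ 2 +
      x 2 ^ 3 * (x 3 ^ 2 + c * x 1 * x 4 ^ 3 + c * x 1 * x 3 * x 5))

/-- The polynomial `H` of `e₀^c`, the denominator in its action on `x₅`. -/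
def e0H (c : ℝ) (x : Fin 6 → ℝ) : ℝ :=
  c * x 0 ^ 2 * x 2 ^ 3 * x 3 + x 1 * x 2 ^ 3 * x 3 ^ 2 * x 5 +
    x 0 * (x 1 * x 3 ^ 3 + 3 * x 1 * x 2 * x 3 ^ 2 * x 4 + 3 * x 1 * x 2 ^ 2 * x 3 * x 4 ^ 2 +
      x 2 ^ 3 * (x 3 ^ 2 + x 1 * x 4 ^ 3 + c * x 1 * x 3 * x 5))

theorem e0act_eq (c : ℝ) (x : Fin 6 → ℝ) :
    e0act c x =
      ![e0D c x / (c * e0E x) * x 0, e0F c x / (c * e0E x) * x 1, e0G c x / (c * e0E x) * x 2,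
        e0D c x * e0H c x / (c ^ 2 * e0E x * e0F c x) * x 3, e0D c x / (c * e0G c x) * x 4,
        e0D c x / (c * e0H c x) * x 5] :=
  rfl

theorem add_mul_e0D (c : ℝ) (x : Fin 6 → ℝ) :
    (x 0 + x 1 * x 5) * e0D c x = c * x 0 * e0H c x + x 1 * x 5 * e0F c x := by
  simp only [e0D, e0F, e0H]
  ring

theorem add_mul_e0G (c : ℝ) (x : Fin 6 → ℝ) :
    (x 3 + x 2 * x 4) * e0G c x = x 3 * e0H c x + x 2 * x 4 * e0F c x := by
  simp only [e0F, e0G, e0H]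
  ring

theorem e0D_pos (hc : 0 < c) (hx : ∀ k, 0 < x k) : 0 < e0D c x := by
  have h0 := hx 0; have h1 := hx 1; have h2 := hx 2
  have h3 := hx 3; have h4 := hx 4; have h5 := hx 5
  unfold e0D
  positivity

theorem e0E_pos (hx : ∀ k, 0 < x k) : 0 < e0E x := by
  have h0 := hx 0; have h1 := hx 1; have h2 := hx 2
  have h3 := hx 3; have h4 := hx 4; have h5 := hx 5
  unfold e0E
  positivity

theorem e0F_pos (hc : 0 < c) (hx : ∀ k, 0 < x k) : 0 < e0F c x := by
  have h0 := hx 0; have h1 := hx 1; have h2 := hx 2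
  have h3 := hx 3; have h4 := hx 4; have h5 := hx 5
  unfold e0F
  positivity

theorem e0G_pos (hc : 0 < c) (hx : ∀ k, 0 < x k) : 0 < e0G c x := by
  have h0 := hx 0; have h1 := hx 1; have h2 := hx 2
  have h3 := hx 3; have h4 := hx 4; have h5 := hx 5
  unfold e0G
  positivity

theorem e0H_pos (hc : 0 < c) (hx : ∀ k, 0 < x k) : 0 < e0H c x := by
  have h0 := hx 0; have h1 := hx 1; have h2 := hx 2
  have h3 := hx 3; have h4 := hx 4; have h5 := hx 5
  unfold e0H
  positivity

theorem e0act_pos (hc : 0 < c) (hx : ∀ k, 0 < x k) (k : Fin 6) : 0 < e0act c x k := by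
  have h0 := hx 0; have h1 := hx 1; have h2 := hx 2
  have h3 := hx 3; have h4 := hx 4; have h5 := hx 5
  have hD := e0D_pos hc hx
  have hE := e0E_pos hx
  have hF := e0F_pos hc hx
  have hG := e0G_pos hc hx
  have hH := e0H_pos hc hx
  rw [e0act_eq]
  match k with
  | 0 | 1 | 2 | 3 | 4 | 5 => simp only [Matrix.cons_val]; positivity

theorem prefixScaledSum_eps0Terms (c : ℝ) (hx : ∀ k, 0 < x k) (j : Fin 4) :
    prefixScaledSum c (eps0Terms x) j =
      ![e0E x, e0H c x, e0F c x, c * e0E x] j / (x 0 ^ 3 * x 2 ^ 3 * x 3) := by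
  have h0 := hx 0
  have h2 := hx 2
  have h3 := hx 3
  match j with
  | 0 | 1 | 2 | 3 =>
    simp only [eps0Terms, prefixScaledSum_triple, e0E, e0F, e0H, Matrix.cons_val]
    field_simp
    ring

theorem eps0Terms_e0act (hc : 0 < c) (hx : ∀ k, 0 < x k) :
    eps0Terms (e0act c x) = rescaledTerms c (eps0Terms x) := by
  have h0 := hx 0; have h1 := hx 1; have h2 := hx 2
  have h3 := hx 3; have h4 := hx 4; have h5 := hx 5
  have hD := e0D_pos hc hx
  have hE := e0E_pos hx
  have hF := e0F_pos hc hx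
  have hG := e0G_pos hc hx
  have hH := e0H_pos hc hx
  have hDHF := add_mul_e0D c x
  have hGHF := add_mul_e0G c x
  simp only [e0act_eq, funext_iff, rescaledTerms, prefixScaledSum_eps0Terms c hx]
  generalize e0D c x = D, e0E x = E, e0F c x = F, e0G c x = G, e0H c x = H at *
  have hsum05 : D / (c * E) * x 0 + F / (c * E) * x 1 * (D / (c * H) * x 5) =
      D ^ 2 / (c ^ 2 * E * H) * (x 0 + x 1 * x 5) := by
    field_simp
    linear_combination -hDHF
  have hsum34 : D * H / (c ^ 2 * E * F) * x 3 + G / (c * E) * x 2 * (D / (c * G) * x 4) =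
      D * G / (c ^ 2 * E * F) * (x 3 + x 2 * x 4) := by
    field_simp
    linear_combination -hGHF
  intro j
  match j with
  | 0 | 1 | 2 =>
    simp only [eps0Terms, Matrix.cons_val, Fin.castSucc_zero, Fin.castSucc_one,
      Fin.succ_zero_eq_one, Fin.succ_one_eq_two, Fin.reduceSucc, Fin.reduceCastSucc, hsum05, hsum34]
    field_simp

theorem eps0_e0act (hc : 0 < c) (hx : ∀ k, 0 < x k) : eps0 (e0act c x) = c⁻¹ * eps0 x := by
  rw [eps0_eq_sum (e0act_pos hc hx), eps0_eq_sum hx, eps0Terms_e0act hc hx, sum_rescaledTerms]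
  exact fun j ↦ ne_of_gt (prefixScaledSum_pos hc (eps0Terms_pos hx) j)

end Terms

/-- Scaling property: `ε_i(e_i^c(x)) = c⁻¹·ε_i(x)`. -/
theorem eps_eact (i : Fin 3) (c : ℝ) (hc : 0 < c) (x : Fin 6 → ℝ) (hx : ∀ k, 0 < x k) :
    epss i (eact i c x) = c⁻¹ * epss i x := by
  fin_cases i
  · exact (eps0_e0act hc hx :)
  · exact (eps1_e1act hc hx :)
  · exact (eps2_e2act hc hx :)
end

section
/- Positivity of the geometric crystal structure (part of Theorem 5.3): each of the following rational functions, regarded as an element of the rational function field ℝ(c, x0,...,x5) (respectively ℝ(x0,...,x5)), can be written as a quotient g/h of two nonzero polynomials all of whose coefficients are nonnegative: each of the six components of e0^c(x), each of the six components of e1^c(x), each of the six components of e2^c(x), and the functions ε0(x), ε1(x), ε2(x), γ0(x), γ1(x), γ2(x). -/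
/-!
Positive constants and coordinates are quotients of nonzero polynomials with nonnegative
coefficients, and such quotients are closed under `+`, `*` and `/`: coefficients of the same sign
cannot cancel, so numerators stay nonzero, and denominators do not vanish on the positive orthant.
The formulas for the geometric crystal involve no subtraction.
-/

section NonnegCoeff

open MvPolynomial

variable {σ R : Type*} [CommSemiring R] [PartialOrder R]

theorem coeff_map_coeRingHom_nonneg [IsOrderedRing R] (p : MvPolynomial σ {r : R // 0 ≤ r})
    (d : σ →₀ ℕ) : 0 ≤ coeff d (map Nonneg.coeRingHom p) := by
  rw [coeff_map]
  exact (coeff d p).2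

theorem add_ne_zero_of_ne_zero_left [IsOrderedRing R] {p q : MvPolynomial σ {r : R // 0 ≤ r}}
    (hp : p ≠ 0) : p + q ≠ 0 := by
  obtain ⟨d, hd⟩ := ne_zero_iff.1 hp
  refine ne_zero_iff.2 ⟨d, fun h_zero => hd (Subtype.ext ?_)⟩
  have coeff_add_eq_zero : (coeff d p).val + (coeff d q).val = 0 := by
    rw [← Nonneg.coe_add, ← coeff_add, h_zero, Nonneg.coe_zero]
  exact ((add_eq_zero_iff_of_nonneg (coeff d p).2 (coeff d q).2).1 coeff_add_eq_zero).1

theorem eval₂_coeRingHom_pos [IsStrictOrderedRing R] {p : MvPolynomial σ {r : R // 0 ≤ r}}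
    (hp : p ≠ 0) {y : σ → R} (hy : ∀ k, 0 < y k) : 0 < eval₂ Nonneg.coeRingHom y p := by
  rw [eval₂_eq]
  refine Finset.sum_pos (fun d hd => ?_) (support_nonempty.2 hp)
  have coeff_pos : 0 < (coeff d p).val :=
    (coeff d p).2.lt_of_ne' (Subtype.coe_ne_coe.2 (mem_support_iff.1 hd))
  exact mul_pos coeff_pos (Finset.prod_pos fun k _ => pow_pos (hy k) _)

end NonnegCoeff

section SubtractionFree

open MvPolynomial

variable {σ K : Type*} [Semifield K] [LinearOrder K] [IsStrictOrderedRing K]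

/-- A function is *subtraction-free* if on the positive orthant it is a quotient of nonzero
polynomials with nonnegative coefficients. Taking the polynomials over the semiring of nonnegative
scalars builds the sign condition into their type. -/
@[fun_prop]
def IsSubtractionFree (f : (σ → K) → K) : Prop :=
  ∃ g h : MvPolynomial σ {r : K // 0 ≤ r}, g ≠ 0 ∧ h ≠ 0 ∧
    ∀ y : σ → K, (∀ k, 0 < y k) →
      f y = eval₂ Nonneg.coeRingHom y g / eval₂ Nonneg.coeRingHom y h

namespace IsSubtractionFree

variable {f f' : (σ → K) → K}

@[fun_prop]
theorem const {r : K} (hr : 0 < r) : IsSubtractionFree fun _ : σ → K => r :=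
  ⟨C ⟨r, hr.le⟩, 1, C_ne_zero.2 (Subtype.coe_ne_coe.1 hr.ne'), one_ne_zero,
    fun y _ => by rw [eval₂_C, eval₂_one, div_one]; rfl⟩

@[fun_prop]
theorem apply (k : σ) : IsSubtractionFree fun y : σ → K => y k :=
  ⟨X k, 1, X_ne_zero k, one_ne_zero, fun y _ => by rw [eval₂_X, eval₂_one, div_one]⟩

@[fun_prop]
theorem add (hf : IsSubtractionFree f) (hf' : IsSubtractionFree f') :
    IsSubtractionFree fun y => f y + f' y := by
  obtain ⟨g, h, hg, hh, hgh⟩ := hf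
  obtain ⟨g', h', _, hh', hgh'⟩ := hf'
  refine ⟨g * h' + h * g', h * h',
    add_ne_zero_of_ne_zero_left (mul_ne_zero hg hh'), mul_ne_zero hh hh', fun y hy => ?_⟩
  simp only [hgh y hy, hgh' y hy, eval₂_add, eval₂_mul]
  exact div_add_div _ _ (eval₂_coeRingHom_pos hh hy).ne' (eval₂_coeRingHom_pos hh' hy).ne'

@[fun_prop]
theorem mul (hf : IsSubtractionFree f) (hf' : IsSubtractionFree f') :
    IsSubtractionFree fun y => f y * f' y := by
  obtain ⟨g, h, hg, hh, hgh⟩ := hf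
  obtain ⟨g', h', hg', hh', hgh'⟩ := hf'
  refine ⟨g * g', h * h', mul_ne_zero hg hg', mul_ne_zero hh hh', fun y hy => ?_⟩
  simp only [hgh y hy, hgh' y hy, eval₂_mul, div_mul_div_comm]

@[fun_prop]
theorem inv (hf : IsSubtractionFree f) : IsSubtractionFree fun y => (f y)⁻¹ := by
  obtain ⟨g, h, hg, hh, hgh⟩ := hf
  exact ⟨h, g, hh, hg, fun y hy => by simp only [hgh y hy, inv_div]⟩

@[fun_prop]
theorem div (hf : IsSubtractionFree f) (hf' : IsSubtractionFree f') :
    IsSubtractionFree fun y => f y / f' y := by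
  simpa only [div_eq_mul_inv] using hf.mul hf'.inv

@[fun_prop]
theorem pow (hf : IsSubtractionFree f) (n : ℕ) : IsSubtractionFree fun y => f y ^ n := by
  induction n with
  | zero => simpa only [pow_zero] using const one_pos
  | succ n ih => simpa only [pow_succ] using ih.mul hf

theorem exists_coeff_nonneg (hf : IsSubtractionFree f) :
    ∃ g h : MvPolynomial σ K, g ≠ 0 ∧ h ≠ 0 ∧ (∀ d, 0 ≤ coeff d g) ∧ (∀ d, 0 ≤ coeff d h) ∧
      ∀ y : σ → K, (∀ k, 0 < y k) → f y = eval y g / eval y h := by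
  obtain ⟨g, h, hg, hh, hgh⟩ := hf
  have map_inj := map_injective (σ := σ) (Nonneg.coeRingHom (α := K)) Subtype.val_injective
  refine ⟨map (Nonneg.coeRingHom (α := K)) g, map (Nonneg.coeRingHom (α := K)) h,
    (map_ne_zero_iff _ map_inj).2 hg, (map_ne_zero_iff _ map_inj).2 hh,
    coeff_map_coeRingHom_nonneg g, coeff_map_coeRingHom_nonneg h, fun y hy => ?_⟩
  rw [hgh y hy, eval_map, eval_map]

end IsSubtractionFree

end SubtractionFree

theorem isSubtractionFree_e0act (j : Fin 6) :
    IsSubtractionFree fun y : Fin 7 → ℝ => e0act (y 0) (Fin.tail y) j := by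
  fin_cases j <;> simp only [e0act, Fin.tail, Fin.reduceFinMk, Matrix.cons_val] <;>
    fun_prop (disch := positivity)

theorem isSubtractionFree_e1act (j : Fin 6) :
    IsSubtractionFree fun y : Fin 7 → ℝ => e1act (y 0) (Fin.tail y) j := by
  fin_cases j <;> simp only [e1act, Fin.tail, Fin.reduceFinMk, Matrix.cons_val] <;>
    fun_prop (disch := positivity)

theorem isSubtractionFree_e2act (j : Fin 6) :
    IsSubtractionFree fun y : Fin 7 → ℝ => e2act (y 0) (Fin.tail y) j := by
  fin_cases j <;> simp only [e2act, Fin.tail, Fin.reduceFinMk, Matrix.cons_val] <;>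
    fun_prop (disch := positivity)

theorem isSubtractionFree_eact (i : Fin 3) (j : Fin 6) :
    IsSubtractionFree fun y : Fin 7 → ℝ => eact i (y 0) (Fin.tail y) j :=
  match i with
  | 0 => isSubtractionFree_e0act j
  | 1 => isSubtractionFree_e1act j
  | 2 => isSubtractionFree_e2act j

theorem isSubtractionFree_eps_gamma {F : (Fin 6 → ℝ) → ℝ}
    (hF : F ∈ ({eps0, eps1, eps2, gamma0, gamma1, gamma2} : Set ((Fin 6 → ℝ) → ℝ))) :
    IsSubtractionFree F := by
  rcases hF with rfl | rfl | rfl | rfl | rfl | rfl <;>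
    fun_prop (disch := positivity) [eps0, eps1, eps2, gamma0, gamma1, gamma2]

/-- Positivity of the geometric crystal structure: every component of `e_i^c`, and the
functions `ε_i` and `γ_i`, are ratios of nonzero polynomials (in `c, x0,...,x5`, resp.
`x0,...,x5`) with nonnegative coefficients. -/
theorem geometric_crystal_positive :
    (∀ i : Fin 3, ∀ j : Fin 6, ∃ g h : MvPolynomial (Fin 7) ℝ, g ≠ 0 ∧ h ≠ 0 ∧
      (∀ d, 0 ≤ MvPolynomial.coeff d g) ∧ (∀ d, 0 ≤ MvPolynomial.coeff d h) ∧
      ∀ c : ℝ, 0 < c → ∀ x : Fin 6 → ℝ, (∀ k, 0 < x k) →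
        eact i c x j =
          MvPolynomial.eval (Fin.cons c x) g / MvPolynomial.eval (Fin.cons c x) h) ∧
    (∀ F ∈ ({eps0, eps1, eps2, gamma0, gamma1, gamma2} : Set ((Fin 6 → ℝ) → ℝ)),
      ∃ g h : MvPolynomial (Fin 6) ℝ, g ≠ 0 ∧ h ≠ 0 ∧
      (∀ d, 0 ≤ MvPolynomial.coeff d g) ∧ (∀ d, 0 ≤ MvPolynomial.coeff d h) ∧
      ∀ x : Fin 6 → ℝ, (∀ k, 0 < x k) →
        F x = MvPolynomial.eval x g / MvPolynomial.eval x h) := by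
  refine ⟨fun i j => ?_, fun F hF => (isSubtractionFree_eps_gamma hF).exists_coeff_nonneg⟩
  obtain ⟨g, h, hg, hh, hg_nonneg, hh_nonneg, hgh⟩ :=
    (isSubtractionFree_eact i j).exists_coeff_nonneg
  refine ⟨g, h, hg, hh, hg_nonneg, hh_nonneg, fun c hc x hx => ?_⟩
  simpa only [Fin.cons_zero, Fin.tail_cons] using hgh (Fin.cons c x) (Fin.cases hc hx)
end
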